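/- arXiv:1805.03163 — 2 statements merged into one kernel-verified Lean document; each statement's English description precedes it below -/
import Mathlib

section
/- Let (F_i)_{i : Fin n} be a family of monotone coordinate-update maps on Fin n → Bool, let π be a permutation of Fin n, and let F_π := F_{π(n-1)} ∘ ⋯ ∘ F_{π(0)}. Let 0 ≤ k ≤ n and suppose X is of type S₀(π,k) or of type S₁(π,k). Then X cannot be a non-trivial periodic point of F_π: if F_π^[p] X = X for some p ≥ 1, then F_π X = X. -/
/-- The SDS map `F_{π(n-1)} ∘ ⋯ ∘ F_{π(1)} ∘ F_{π(0)}`: vertex `π 0` is updated first. -/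
def seqComp {n : ℕ} (F : Fin n → (Fin n → Bool) → (Fin n → Bool))
    (π : Equiv.Perm (Fin n)) (X : Fin n → Bool) : Fin n → Bool :=
  (List.finRange n).foldl (fun Y i => F (π i) Y) X

/-- `X` is of type `S₀(π,k)`: the first `k` vertices in the schedule are `false`, the rest `true`. -/
def isS0 {n : ℕ} (π : Equiv.Perm (Fin n)) (k : ℕ) (X : Fin n → Bool) : Prop :=
  ∀ i : Fin n, (i.val < k → X (π i) = false) ∧ (k ≤ i.val → X (π i) = true)

/-- `X` is of type `S₁(π,k)`: the first `k` vertices in the schedule are `true`, the rest `false`. -/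
def isS1 {n : ℕ} (π : Equiv.Perm (Fin n)) (k : ℕ) (X : Fin n → Bool) : Prop :=
  ∀ i : Fin n, (i.val < k → X (π i) = true) ∧ (k ≤ i.val → X (π i) = false)

theorem foldl_upd_mono {n : ℕ} (F : Fin n → (Fin n → Bool) → (Fin n → Bool))
    (hmono : ∀ i : Fin n, Monotone (F i)) (π : Equiv.Perm (Fin n)) (l : List (Fin n)) :
    Monotone (fun X => l.foldl (fun Y i => F (π i) Y) X) := by
  induction l with
  | nil => exact fun _ _ h => h
  | cons a l ih => exact fun X Y h => ih (hmono (π a) h)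

theorem foldl_upd_eq {n : ℕ} (F : Fin n → (Fin n → Bool) → (Fin n → Bool))
    (hupd : ∀ (i : Fin n) (X : Fin n → Bool) (j : Fin n), j ≠ i → F i X j = X j)
    (π : Equiv.Perm (Fin n)) (l : List (Fin n)) (i : Fin n) (hi : i ∉ l) (X : Fin n → Bool) :
    l.foldl (fun Y i => F (π i) Y) X (π i) = X (π i) := by
  induction l generalizing X with
  | nil => rfl
  | cons a l ih =>
    simp only [List.mem_cons, not_or] at hi
    rw [List.foldl_cons, ih hi.2]
    exact hupd _ _ _ (fun h => hi.1 (π.injective h))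

theorem stmt_10 {n : ℕ} (F : Fin n → (Fin n → Bool) → (Fin n → Bool))
    (hupd : ∀ (i : Fin n) (X : Fin n → Bool) (j : Fin n), j ≠ i → F i X j = X j)
    (hmono : ∀ i : Fin n, Monotone (F i))
    (π : Equiv.Perm (Fin n)) (k : ℕ) (hk : k ≤ n)
    (X : Fin n → Bool) (hX : isS0 π k X ∨ isS1 π k X)
    (p : ℕ) (hp : 1 ≤ p) (hper : (seqComp F π)^[p] X = X) :
    seqComp F π X = X := by
  obtain ⟨q, rfl⟩ : ∃ q, p = q + 1 := ⟨p - 1, by omega⟩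
  have hF : Monotone (seqComp F π) := foldl_upd_mono F hmono π _
  have hB := foldl_upd_mono F hmono π ((List.finRange n).drop k)
  have hsplit : ∀ Y, seqComp F π Y = ((List.finRange n).drop k).foldl (fun Y i => F (π i) Y)
      (((List.finRange n).take k).foldl (fun Y i => F (π i) Y) Y) := by
    intro Y
    rw [← List.foldl_append, List.take_append_drop]
    rfl
  have htake : ∀ i : Fin n, k ≤ i.val → i ∉ (List.finRange n).take k := by
    intro i hi hm
    obtain ⟨j, hj, rfl⟩ := List.mem_take_iff_getElem.1 hm
    simp at hi hj
    omega
  have hdrop : ∀ i : Fin n, i.val < k → i ∉ (List.finRange n).drop k := by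
    intro i hi hm
    obtain ⟨j, hj, rfl⟩ := List.mem_drop_iff_getElem.1 hm
    simp at hi
  have hA : ∀ i : Fin n, k ≤ i.val → ∀ Y,
      ((List.finRange n).take k).foldl (fun Y i => F (π i) Y) Y (π i) = Y (π i) :=
    fun i hi Y => foldl_upd_eq F hupd π _ i (htake i hi) Y
  -- the state after the first `k` updates of the last round agrees with `X` on the first block
  have hper' := hper
  rw [Function.iterate_succ_apply'] at hper'
  set Z := (seqComp F π)^[q] X with hZ
  have hAZ : ∀ i : Fin n, i.val < k →
      ((List.finRange n).take k).foldl (fun Y i => F (π i) Y) Z (π i) = X (π i) := by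
    intro i hi
    have h := foldl_upd_eq F hupd π _ i (hdrop i hi)
      (((List.finRange n).take k).foldl (fun Y i => F (π i) Y) Z)
    rw [← hsplit, hper'] at h
    exact h.symm
  rcases hX with hX | hX
  · have hle : X ≤ seqComp F π X := by
      conv_lhs => rw [← hper', hsplit]
      rw [hsplit]
      apply hB
      intro j
      obtain ⟨i, rfl⟩ := π.surjective j
      rcases lt_or_ge i.val k with hi | hi
      · rw [hAZ i hi, (hX i).1 hi]; exact Bool.false_le _
      · rw [hA i hi X, (hX i).2 hi]; exact Bool.le_true _
    refine le_antisymm ?_ hle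
    have := hF.monotone_iterate_of_le_map hle (show 1 ≤ q + 1 by omega)
    beta_reduce at this
    rwa [hper] at this
  · have hle : seqComp F π X ≤ X := by
      conv_rhs => rw [← hper', hsplit]
      rw [hsplit]
      apply hB
      intro j
      obtain ⟨i, rfl⟩ := π.surjective j
      rcases lt_or_ge i.val k with hi | hi
      · rw [hAZ i hi, (hX i).1 hi]; exact Bool.le_true _
      · rw [hA i hi X, (hX i).2 hi]; exact Bool.false_le _
    refine le_antisymm hle ?_
    have := hF.antitone_iterate_of_map_le hle (show 1 ≤ q + 1 by omega)
    beta_reduce at this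
    rwa [hper] at this
end

section
/- Let (F_i)_{i : Fin n} be a family of monotone coordinate-update maps on Fin n → Bool, and let X : Fin n → Bool be a state having exactly m coordinates equal to false, where 0 < m < n. Then the number of permutations π of Fin n such that X is a Garden-of-Eden state of F_π or X reaches a fixed point of F_π is at least 2 · m! · (n − m)!. -/
def foldF {n : ℕ} (F : Fin n → (Fin n → Bool) → (Fin n → Bool)) (L : List (Fin n))
    (X : Fin n → Bool) : Fin n → Bool := L.foldl (fun Y i => F i Y) X

lemma foldF_mono {n : ℕ} (F : Fin n → (Fin n → Bool) → (Fin n → Bool))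
    (hmono : ∀ i : Fin n, Monotone (F i)) (L : List (Fin n)) : Monotone (foldF F L) := by
  induction L with
  | nil => intro a b h; exact h
  | cons i L ih => intro a b h; exact ih (hmono i h)

lemma foldF_off {n : ℕ} (F : Fin n → (Fin n → Bool) → (Fin n → Bool))
    (hupd : ∀ (i : Fin n) (X : Fin n → Bool) (j : Fin n), j ≠ i → F i X j = X j)
    (L : List (Fin n)) (j : Fin n) (hj : j ∉ L) (X : Fin n → Bool) : foldF F L X j = X j := by
  induction L generalizing X with
  | nil => rfl
  | cons i L ih =>
    simp only [List.mem_cons, not_or] at hj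
    exact (ih hj.2 (F i X)).trans (hupd i X j hj.1)

lemma up_step {n : ℕ} (F : Fin n → (Fin n → Bool) → (Fin n → Bool))
    (hupd : ∀ (i : Fin n) (X : Fin n → Bool) (j : Fin n), j ≠ i → F i X j = X j)
    (hmono : ∀ i : Fin n, Monotone (F i)) (X Y : Fin n → Bool) (L₁ L₂ : List (Fin n))
    (h1 : ∀ i ∈ L₁, X i = false) (h2 : ∀ i ∈ L₂, X i = true)
    (hY : foldF F L₂ (foldF F L₁ Y) = X) : X ≤ foldF F L₂ (foldF F L₁ X) := by
  have hW : foldF F L₁ Y ≤ X := by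
    intro j
    cases hj : X j with
    | true => exact Bool.le_true _
    | false =>
      have : j ∉ L₂ := fun h => by simp [h2 j h] at hj
      rw [← foldF_off F hupd L₂ j this (foldF F L₁ Y), hY, hj]
  have hA : X ≤ foldF F L₁ X := by
    intro j
    cases hj : X j with
    | false => exact Bool.false_le _
    | true =>
      have : j ∉ L₁ := fun h => by simp [h1 j h] at hj
      rw [foldF_off F hupd L₁ j this, hj]
  calc X = foldF F L₂ (foldF F L₁ Y) := hY.symm
    _ ≤ foldF F L₂ X := foldF_mono F hmono _ hW
    _ ≤ _ := foldF_mono F hmono _ hA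

lemma down_step {n : ℕ} (F : Fin n → (Fin n → Bool) → (Fin n → Bool))
    (hupd : ∀ (i : Fin n) (X : Fin n → Bool) (j : Fin n), j ≠ i → F i X j = X j)
    (hmono : ∀ i : Fin n, Monotone (F i)) (X Y : Fin n → Bool) (L₁ L₂ : List (Fin n))
    (h1 : ∀ i ∈ L₁, X i = true) (h2 : ∀ i ∈ L₂, X i = false)
    (hY : foldF F L₂ (foldF F L₁ Y) = X) : foldF F L₂ (foldF F L₁ X) ≤ X := by
  have hW : X ≤ foldF F L₁ Y := by
    intro j
    cases hj : X j with
    | false => exact Bool.false_le _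
    | true =>
      have : j ∉ L₂ := fun h => by simp [h2 j h] at hj
      rw [← foldF_off F hupd L₂ j this (foldF F L₁ Y), hY, hj]
  have hA : foldF F L₁ X ≤ X := by
    intro j
    cases hj : X j with
    | true => exact Bool.le_true _
    | false =>
      have : j ∉ L₁ := fun h => by simp [h1 j h] at hj
      rw [foldF_off F hupd L₁ j this, hj]
  calc _ ≤ foldF F L₂ X := foldF_mono F hmono _ hA
    _ ≤ foldF F L₂ (foldF F L₁ Y) := foldF_mono F hmono _ hW
    _ = X := hY

lemma seqComp_split {n : ℕ} (F : Fin n → (Fin n → Bool) → (Fin n → Bool))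
    (π : Equiv.Perm (Fin n)) (k : ℕ) (X : Fin n → Bool) :
    seqComp F π X = foldF F (((List.finRange n).drop k).map π)
      (foldF F (((List.finRange n).take k).map π) X) := by
  unfold foldF seqComp
  rw [← List.foldl_append, ← List.map_append, List.take_append_drop, List.foldl_map]

lemma seqComp_mono {n : ℕ} (F : Fin n → (Fin n → Bool) → (Fin n → Bool))
    (hmono : ∀ i : Fin n, Monotone (F i)) (π : Equiv.Perm (Fin n)) :
    Monotone (seqComp F π) := by
  intro a b h
  rw [seqComp_split F π 0, seqComp_split F π 0]
  exact foldF_mono F hmono _ (foldF_mono F hmono _ h)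

lemma fix_up {n : ℕ} (G : (Fin n → Bool) → (Fin n → Bool)) (hG : Monotone G)
    (X : Fin n → Bool) (h : X ≤ G X) : ∃ k : ℕ, G (G^[k] X) = G^[k] X := by
  obtain ⟨k, hk⟩ := WellFoundedGT.monotone_chain_condition
    ⟨fun k => G^[k] X, hG.monotone_iterate_of_le_map h⟩
  refine ⟨k, ?_⟩
  have := hk (k+1) (by omega)
  simp only [OrderHom.coe_mk, Function.iterate_succ_apply'] at this
  exact this.symm

lemma fix_down {n : ℕ} (G : (Fin n → Bool) → (Fin n → Bool)) (hG : Monotone G)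
    (X : Fin n → Bool) (h : G X ≤ X) : ∃ k : ℕ, G (G^[k] X) = G^[k] X := by
  obtain ⟨k, hk⟩ := WellFoundedGT.monotone_chain_condition (α := (Fin n → Bool)ᵒᵈ)
    ⟨fun k => OrderDual.toDual (G^[k] X), hG.antitone_iterate_of_map_le h⟩
  refine ⟨k, ?_⟩
  have := hk (k+1) (by omega)
  have h2 : G^[k] X = G^[k+1] X := this
  rw [Function.iterate_succ_apply'] at h2
  exact h2.symm

lemma mem_take_finRange {n k : ℕ} {i : Fin n} (h : i ∈ (List.finRange n).take k) : i.val < k := by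
  obtain ⟨j, hj, rfl⟩ := List.mem_iff_getElem.1 h
  simp at hj ⊢
  omega

lemma mem_drop_finRange {n k : ℕ} {i : Fin n} (h : i ∈ (List.finRange n).drop k) : k ≤ i.val := by
  obtain ⟨j, hj, rfl⟩ := List.mem_iff_getElem.1 h
  simp

lemma card_perm_comp {n m : ℕ} (X c : Fin n → Bool) (hmn : m < n)
    (hX : (Finset.univ.filter fun i : Fin n => X i = false).card = m)
    (hc : (Finset.univ.filter fun i : Fin n => c i = false).card = m) :
    {π : Equiv.Perm (Fin n) | X ∘ π = c}.ncard = m.factorial * (n - m).factorial := by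
  have compl : ∀ Y : Fin n → Bool, (Finset.univ.filter fun i : Fin n => Y i = false).card = m →
      (Finset.univ.filter fun i : Fin n => Y i = true).card = n - m := by
    intro Y hY
    have := Finset.card_filter_add_card_filter_not (s := (Finset.univ : Finset (Fin n)))
      (fun i => Y i = false)
    simp only [Bool.not_eq_false, Finset.card_univ, Fintype.card_fin] at this
    omega
  have hcard : ∀ b, Nonempty ({i // c i = b} ≃ {i // X i = b}) := by
    intro b
    refine ⟨Fintype.equivOfCardEq ?_⟩
    rw [Fintype.card_subtype, Fintype.card_subtype]
    cases b
    · rw [hX, hc]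
    · rw [compl X hX, compl c hc]
  let π₀ : Equiv.Perm (Fin n) := Equiv.ofFiberEquiv (f := c) (g := X) fun b => (hcard b).some
  have hπ₀ : ∀ i, X (π₀ i) = c i := fun i => Equiv.ofFiberEquiv_map _ i
  have hs := DomMulAct.stabilizer_card (f := X)
  rw [Fintype.prod_bool, ← Nat.card_eq_fintype_card] at hs
  have a1 : Fintype.card {a // X a = true} = n - m := by rw [Fintype.card_subtype, compl X hX]
  have a2 : Fintype.card {a // X a = false} = m := by rw [Fintype.card_subtype, hX]
  rw [a1, a2] at hs
  rw [mul_comm, ← hs, ← Nat.card_coe_set_eq]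
  refine Nat.card_congr ((Equiv.mulRight π₀⁻¹).subtypeEquiv ?_)
  intro π
  simp only [Set.mem_setOf_eq, Equiv.coe_mulRight, funext_iff, Function.comp, Equiv.Perm.mul_apply]
  constructor
  · intro h i
    rw [h, ← hπ₀]; simp
  · intro h i
    have := h (π₀ i)
    simpa [hπ₀] using this

theorem stmt_13 {n : ℕ} (F : Fin n → (Fin n → Bool) → (Fin n → Bool))
    (hupd : ∀ (i : Fin n) (X : Fin n → Bool) (j : Fin n), j ≠ i → F i X j = X j)
    (hmono : ∀ i : Fin n, Monotone (F i))
    (X : Fin n → Bool) (m : ℕ) (hm0 : 0 < m) (hmn : m < n)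
    (hX : (Finset.univ.filter fun i : Fin n => X i = false).card = m) :
    2 * Nat.factorial m * Nat.factorial (n - m) ≤
      ({π : Equiv.Perm (Fin n) |
        X ∉ Set.range (seqComp F π) ∨
        ∃ k : ℕ, seqComp F π ((seqComp F π)^[k] X) = (seqComp F π)^[k] X}).ncard := by
  let c₁ : Fin n → Bool := fun i => decide (m ≤ i.val)
  let c₂ : Fin n → Bool := fun i => decide (i.val < n - m)
  have hc₁ : (Finset.univ.filter fun i : Fin n => c₁ i = false).card = m := by
    simp only [c₁, decide_eq_false_iff_not, not_le]
    rw [Fin.card_filter_val_lt]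
    omega
  have hc₂ : (Finset.univ.filter fun i : Fin n => c₂ i = false).card = m := by
    simp only [c₂, decide_eq_false_iff_not]
    have := Finset.card_filter_add_card_filter_not (s := (Finset.univ : Finset (Fin n)))
      (fun i => i.val < n - m)
    rw [Fin.card_filter_val_lt] at this
    simp only [Finset.card_univ, Fintype.card_fin] at this
    omega
  have e₁ := card_perm_comp X c₁ hmn hX hc₁
  have e₂ := card_perm_comp X c₂ hmn hX hc₂
  have hdis : Disjoint {π : Equiv.Perm (Fin n) | X ∘ π = c₁} {π | X ∘ π = c₂} := by
    rw [Set.disjoint_left]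
    intro π h1 h2
    have h := congrFun (h1.symm.trans h2) ⟨0, by omega⟩
    simp only [c₁, c₂, decide_eq_decide] at h
    omega
  have hu := Set.ncard_union_eq hdis (Set.toFinite _) (Set.toFinite _)
  rw [e₁, e₂] at hu
  rw [mul_assoc, two_mul, ← hu]
  refine Set.ncard_le_ncard ?_ (Set.toFinite _)
  rintro π (h | h)
  · by_cases hr : X ∈ Set.range (seqComp F π)
    · right
      obtain ⟨Y, hY⟩ := hr
      apply fix_up _ (seqComp_mono F hmono π)
      rw [seqComp_split F π m] at hY ⊢
      refine up_step F hupd hmono X Y _ _ ?_ ?_ hY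
      · intro i hi
        obtain ⟨j, hj, rfl⟩ := List.mem_map.1 hi
        refine (congrFun h j).trans ?_
        have := mem_take_finRange hj
        simp [c₁, this]
      · intro i hi
        obtain ⟨j, hj, rfl⟩ := List.mem_map.1 hi
        refine (congrFun h j).trans ?_
        have := mem_drop_finRange hj
        simp [c₁, this]
    · exact Or.inl hr
  · by_cases hr : X ∈ Set.range (seqComp F π)
    · right
      obtain ⟨Y, hY⟩ := hr
      apply fix_down _ (seqComp_mono F hmono π)
      rw [seqComp_split F π (n - m)] at hY ⊢
      refine down_step F hupd hmono X Y _ _ ?_ ?_ hY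
      · intro i hi
        obtain ⟨j, hj, rfl⟩ := List.mem_map.1 hi
        refine (congrFun h j).trans ?_
        have := mem_take_finRange hj
        simp only [c₂, decide_eq_true_eq]; omega
      · intro i hi
        obtain ⟨j, hj, rfl⟩ := List.mem_map.1 hi
        refine (congrFun h j).trans ?_
        have := mem_drop_finRange hj
        simp only [c₂, decide_eq_false_iff_not]; omega
    · exact Or.inl hr
end
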